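/- For every t > 0, every v₀ > 0 and every λ > 0, one has ∫_{(0,v₀]} (e^{λv} − 1 − λv) μ^{ℓ,r}_t(dv) ≤ (D₃ + 3·D₄)·t·v₀^{−γ}·e^{λv₀}, where D₃ := 2^γ·E[R^γ]/(γ(γ−1)) and D₄ := 2^{γ−1}·E[R^γ]/(γ(γ−1)(2−γ)). -/

import Mathlib

open MeasureTheory Filter Set
open scoped ENNReal NNReal Topology

noncomputable section

/-- `ℓ_t(s,u)`: the length of the interval `[s,s+u] ∩ [0,t]`. -/
def ellK (t s u : ℝ) : ℝ := max 0 (min (s + u) t - max s 0)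

/-- The intensity measure `u^{-γ-1} du` on `(0,∞)`. -/
def muU (γ : ℝ) : Measure ℝ :=
  (volume.restrict (Set.Ioi 0)).withDensity fun u => ENNReal.ofReal (u ^ (-γ - 1))

/-- The measure `μ^ℓ_t` on `(0,∞)`:
`μ^ℓ_t(A) = ∫_ℝ ∫_0^∞ 1{ℓ_t(s,u) ∈ A} u^{-γ-1} du ds`. -/
def muEll (γ t : ℝ) : Measure ℝ :=
  (Measure.map (fun p : ℝ × ℝ => ellK t p.1 p.2)
    ((volume : Measure ℝ).prod (muU γ))).restrict (Set.Ioi 0)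

/-- The measure `μ^{ℓ,r}_t` on `(0,∞)`:
`μ^{ℓ,r}_t(A) = ∫_{(0,∞)} ∫_{(0,∞)} 1{rℓ ∈ A} μ^ℓ_t(dℓ) F_R(dr)`. -/
def muEllR (γ t : ℝ) (FR : Measure ℝ) : Measure ℝ :=
  (Measure.map (fun p : ℝ × ℝ => p.1 * p.2) (FR.prod (muEll γ t))).restrict (Set.Ioi 0)

/-- The measure `ν` on `[0,1]`: density `s^{-(γ+1)} + ((2-γ)/γ)·s^{-γ}` on `(0,1)` with
respect to Lebesgue measure, together with an atom of mass `1/(γ(γ-1))` at the point `1`. -/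
def nuM (γ : ℝ) : Measure ℝ :=
  (volume.restrict (Set.Ioo 0 1)).withDensity
      (fun s => ENNReal.ofReal (s ^ (-(γ + 1)) + (2 - γ) / γ * s ^ (-γ)))
    + (Real.toNNReal (1 / (γ * (γ - 1)))) • Measure.dirac 1

instance nuM.sigmaFinite (γ : ℝ) : SigmaFinite (nuM γ) := by
  unfold nuM; infer_instance

end

/-!
A measure whose tail satisfies `μ (x, ∞) ≤ K x ^ (-γ)` has, by the layer-cake formula, truncated
moments `∫_{(0,b]} v ^ p dμ` of order `K b ^ (p - γ)` for `p > γ`. As `(e ^ y - 1 - y) / y ^ 2` is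
increasing on `(0, ∞)`, the integrand is on `(0, b]` at most its value at `b` times `(v / b) ^ 2`,
so it suffices to bound the tail of `μ^{ℓ,r}_t`. Let `0 < x < t`. For a given length `u > x`, the
starting points `s` with `ℓ_t(s,u) > x` form an interval of length `t - 2 x + u`, which gives the
tail of `μ^ℓ_t` in closed form; multiplying by an independent factor `r` multiplies the tail
constant by the `γ`-th moment of `r`.
-/

lemma hasSum_exp_sub_sum_range (n : ℕ) (y : ℝ) :
    HasSum (fun k : ℕ => y ^ (k + n) / (k + n).factorial)
      (Real.exp y - ∑ i ∈ Finset.range n, y ^ i / i.factorial) := by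
  have h := NormedSpace.expSeries_div_hasSum_exp y
  rw [← Real.exp_eq_exp_ℝ] at h
  exact (hasSum_nat_add_iff' n).2 h

lemma exp_mul_sub_sum_range_le (n : ℕ) {c a : ℝ} (hc0 : 0 ≤ c) (hc1 : c ≤ 1) (ha : 0 ≤ a) :
    Real.exp (c * a) - ∑ i ∈ Finset.range n, (c * a) ^ i / i.factorial
      ≤ c ^ n * (Real.exp a - ∑ i ∈ Finset.range n, a ^ i / i.factorial) := by
  refine hasSum_le (fun k => ?_) (hasSum_exp_sub_sum_range n (c * a))
    ((hasSum_exp_sub_sum_range n a).mul_left (c ^ n))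
  have hpow : c ^ (k + n) ≤ c ^ n := pow_le_pow_of_le_one hc0 hc1 (Nat.le_add_left n k)
  rw [mul_pow, mul_div_assoc]
  gcongr

/-- The right tail of `μ` decays at least like a power law of exponent `γ`: `μ (x, ∞) ≤ K x ^ (-γ)`
for every `x > 0`. The constant is extended-valued so that moments enter it without any
integrability assumption. -/
def HasPowerTailBound (μ : Measure ℝ) (γ : ℝ) (K : ℝ≥0∞) : Prop :=
  ∀ ⦃x : ℝ⦄, 0 < x → μ (Ioi x) ≤ K * ENNReal.ofReal (x ^ (-γ))

namespace HasPowerTailBound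

variable {μ ν : Measure ℝ} {γ : ℝ} {K : ℝ≥0∞}

lemma mono (hμ : HasPowerTailBound μ γ K) (hνμ : ν ≤ μ) : HasPowerTailBound ν γ K :=
  fun x hx => (hνμ (Ioi x)).trans (hμ hx)

lemma map_mul_prod [SFinite ν] (hμ : μ (Iic 0) = 0) (hν : HasPowerTailBound ν γ K) :
    HasPowerTailBound ((μ.prod ν).map fun p : ℝ × ℝ => p.1 * p.2) γ
      (K * ∫⁻ r, ENNReal.ofReal (r ^ γ) ∂μ) := by
  intro x hx
  have hmul : Measurable fun p : ℝ × ℝ => p.1 * p.2 := by fun_prop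
  have hpos : ∀ᵐ r ∂μ, 0 < r :=
    (measure_eq_zero_iff_ae_notMem.1 hμ).mono fun _ hr => not_le.1 hr
  rw [Measure.map_apply hmul measurableSet_Ioi, Measure.prod_apply (hmul measurableSet_Ioi),
    mul_right_comm, ← lintegral_const_mul _ (by fun_prop)]
  refine lintegral_mono_ae (hpos.mono fun r hr => ?_)
  calc ν (Prod.mk r ⁻¹' ((fun p : ℝ × ℝ => p.1 * p.2) ⁻¹' Ioi x))
      = ν (Ioi (x / r)) := by
        congr 1
        ext y
        simp only [mem_preimage, mem_Ioi, div_lt_iff₀' hr]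
    _ ≤ K * ENNReal.ofReal ((x / r) ^ (-γ)) := hν (by positivity)
    _ = K * ENNReal.ofReal (x ^ (-γ)) * ENNReal.ofReal (r ^ γ) := by
        rw [Real.div_rpow hx.le hr.le, Real.rpow_neg hr.le, div_inv_eq_mul,
          ENNReal.ofReal_mul (by positivity), mul_assoc]

lemma restrict_Ioc_mul_rpow_le (hμ : HasPowerTailBound μ γ K) (b p : ℝ) {x : ℝ} (hx : 0 < x) :
    μ.restrict (Ioc 0 b) (Ioi x) * ENNReal.ofReal (x ^ (p - 1))
      ≤ (Ioc 0 b).indicator (fun y => K * ENNReal.ofReal (y ^ (p - γ - 1))) x := by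
  rcases le_or_gt x b with hxb | hbx
  · rw [indicator_of_mem (show x ∈ Ioc 0 b from ⟨hx, hxb⟩)]
    calc μ.restrict (Ioc 0 b) (Ioi x) * ENNReal.ofReal (x ^ (p - 1))
        ≤ K * ENNReal.ofReal (x ^ (-γ)) * ENNReal.ofReal (x ^ (p - 1)) := by
          gcongr
          exact hμ.mono Measure.restrict_le_self hx
      _ = K * ENNReal.ofReal (x ^ (p - γ - 1)) := by
          rw [mul_assoc, ← ENNReal.ofReal_mul (by positivity), ← Real.rpow_add hx]
          ring_nf
  · have hdisj : Ioi x ∩ Ioc 0 b = ∅ := by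
      rw [inter_comm, Ioc_inter_Ioi, Ioc_eq_empty]
      exact fun h => absurd (le_max_right 0 x) (by linarith)
    simp [Measure.restrict_apply measurableSet_Ioi, hdisj]

lemma setLIntegral_rpow_le (hμ : HasPowerTailBound μ γ K) {p b : ℝ} (hp : 0 < p) (hγp : γ < p)
    (hb : 0 ≤ b) :
    ∫⁻ v in Ioc 0 b, ENNReal.ofReal (v ^ p) ∂μ
      ≤ K * ENNReal.ofReal (p / (p - γ) * b ^ (p - γ)) := by
  have hnonneg : 0 ≤ᵐ[μ.restrict (Ioc 0 b)] fun v : ℝ => v :=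
    ae_restrict_of_forall_mem measurableSet_Ioc fun v hv => hv.1.le
  have hpow : ∫⁻ x in Ioc 0 b, ENNReal.ofReal (x ^ (p - γ - 1))
      = ENNReal.ofReal (b ^ (p - γ) / (p - γ)) := by
    have hexp : -1 < p - γ - 1 := by linarith
    rw [← ofReal_integral_eq_lintegral_ofReal, ← intervalIntegral.integral_of_le hb,
      integral_rpow (Or.inl hexp), sub_add_cancel, Real.zero_rpow (sub_pos.2 hγp).ne', sub_zero]
    · exact (intervalIntegrable_iff_integrableOn_Ioc_of_le hb).1
        (intervalIntegral.intervalIntegrable_rpow' hexp)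
    · exact ae_restrict_of_forall_mem measurableSet_Ioc fun x hx => Real.rpow_nonneg hx.1.le _
  calc ∫⁻ v in Ioc 0 b, ENNReal.ofReal (v ^ p) ∂μ
      = ENNReal.ofReal p * ∫⁻ x in Ioi 0,
          μ.restrict (Ioc 0 b) (Ioi x) * ENNReal.ofReal (x ^ (p - 1)) :=
        lintegral_rpow_eq_lintegral_meas_lt_mul _ hnonneg aemeasurable_id hp
    _ ≤ ENNReal.ofReal p * ∫⁻ x in Ioi 0,
          (Ioc 0 b).indicator (fun y => K * ENNReal.ofReal (y ^ (p - γ - 1))) x := by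
        gcongr ENNReal.ofReal p * ?_
        exact setLIntegral_mono' measurableSet_Ioi fun x hx => hμ.restrict_Ioc_mul_rpow_le b p hx
    _ = ENNReal.ofReal p * (K * ENNReal.ofReal (b ^ (p - γ) / (p - γ))) := by
        rw [setLIntegral_indicator measurableSet_Ioc, inter_eq_left.2 Ioc_subset_Ioi_self,
          lintegral_const_mul _ (by fun_prop), hpow]
    _ = K * ENNReal.ofReal (p / (p - γ) * b ^ (p - γ)) := by
        rw [mul_left_comm, ← ENNReal.ofReal_mul hp.le, mul_div_left_comm, mul_comm (b ^ _)]

lemma setLIntegral_exp_sub_sum_range_le (hμ : HasPowerTailBound μ γ K) {n : ℕ} (hn : n ≠ 0)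
    (hγn : γ < n) {l b : ℝ} (hl : 0 ≤ l) (hb : 0 < b) :
    ∫⁻ v in Ioc 0 b,
        ENNReal.ofReal (Real.exp (l * v) - ∑ i ∈ Finset.range n, (l * v) ^ i / i.factorial) ∂μ
      ≤ K * ENNReal.ofReal (n / (n - γ) * b ^ (-γ)
          * (Real.exp (l * b) - ∑ i ∈ Finset.range n, (l * b) ^ i / i.factorial)) := by
  set remainder : ℝ := Real.exp (l * b) - ∑ i ∈ Finset.range n, (l * b) ^ i / i.factorial
  have hrem : 0 ≤ remainder := sub_nonneg.2 (Real.sum_le_exp_of_nonneg (by positivity) n)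
  have hpoint : ∀ v ∈ Ioc 0 b,
      Real.exp (l * v) - ∑ i ∈ Finset.range n, (l * v) ^ i / i.factorial
        ≤ remainder / b ^ n * v ^ (n : ℝ) := by
    intro v hv
    have h := exp_mul_sub_sum_range_le n (div_nonneg hv.1.le hb.le) ((div_le_one hb).2 hv.2)
      (mul_nonneg hl hb.le)
    rw [show v / b * (l * b) = l * v by field_simp] at h
    exact h.trans_eq (by rw [Real.rpow_natCast, div_pow]; ring)
  calc _ ≤ ∫⁻ v in Ioc 0 b,
          ENNReal.ofReal (remainder / b ^ n) * ENNReal.ofReal (v ^ (n : ℝ)) ∂μ := by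
        refine setLIntegral_mono' measurableSet_Ioc fun v hv => ?_
        rw [← ENNReal.ofReal_mul (by positivity)]
        exact ENNReal.ofReal_le_ofReal (hpoint v hv)
    _ ≤ ENNReal.ofReal (remainder / b ^ n) * (K * ENNReal.ofReal (n / (n - γ) * b ^ (n - γ))) := by
        rw [lintegral_const_mul' _ _ ENNReal.ofReal_ne_top]
        gcongr
        exact hμ.setLIntegral_rpow_le (by positivity) hγn hb.le
    _ = K * ENNReal.ofReal (n / (n - γ) * b ^ (-γ) * remainder) := by
        rw [mul_left_comm, ← ENNReal.ofReal_mul (by positivity), sub_eq_add_neg (n : ℝ) γ,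
          Real.rpow_add hb, Real.rpow_natCast]
        congr 2
        field_simp

lemma setLIntegral_exp_sub_one_sub_le (hμ : HasPowerTailBound μ γ K) (hγ : γ < 2) {l b : ℝ}
    (hl : 0 ≤ l) (hb : 0 < b) :
    ∫⁻ v in Ioc 0 b, ENNReal.ofReal (Real.exp (l * v) - 1 - l * v) ∂μ
      ≤ K * ENNReal.ofReal (2 / (2 - γ) * b ^ (-γ) * (Real.exp (l * b) - 1 - l * b)) := by
  simpa only [Finset.sum_range_succ, Finset.sum_range_zero, pow_zero, pow_one,
    Nat.factorial_zero, Nat.factorial_one, Nat.cast_one, div_one, zero_add, ← sub_sub,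
    Nat.cast_ofNat] using hμ.setLIntegral_exp_sub_sum_range_le two_ne_zero
      (by exact_mod_cast hγ) hl hb

end HasPowerTailBound

section Tails

variable {γ t x : ℝ}

instance muU.sFinite (γ : ℝ) : SFinite (muU γ) := by
  unfold muU
  infer_instance

instance muEll.sFinite (γ t : ℝ) : SFinite (muEll γ t) := by
  unfold muEll
  infer_instance

lemma lt_ellK_iff {s u : ℝ} (hx : 0 ≤ x) :
    x < ellK t s u ↔ x < t ∧ x < u ∧ s ∈ Ioo (x - u) (t - x) := by
  simp only [ellK, lt_max_iff, hx.not_gt, false_or, lt_sub_iff_add_lt, lt_min_iff,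
    ← max_add_add_left, max_lt_iff, mem_Ioo]
  constructor
  · rintro ⟨⟨h₁, h₂⟩, h₃, h₄⟩
    refine ⟨?_, ?_, ?_, ?_⟩ <;> linarith
  · rintro ⟨h₁, h₂, h₃, h₄⟩
    refine ⟨⟨?_, ?_⟩, ?_, ?_⟩ <;> linarith

lemma measurable_ellK (t : ℝ) : Measurable fun p : ℝ × ℝ => ellK t p.1 p.2 := by
  unfold ellK
  fun_prop

lemma muEll_Ioi_eq_lintegral_volume (γ t : ℝ) (hx : 0 ≤ x) :
    muEll γ t (Ioi x) = ∫⁻ u, volume {s | x < ellK t s u} ∂muU γ := by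
  rw [muEll, Measure.restrict_apply measurableSet_Ioi, inter_eq_left.2 (Ioi_subset_Ioi hx),
    Measure.map_apply (measurable_ellK t) measurableSet_Ioi,
    Measure.prod_apply_symm (measurable_ellK t measurableSet_Ioi)]
  rfl

lemma muEll_Ioi_of_le (γ : ℝ) (hx : 0 ≤ x) (htx : t ≤ x) : muEll γ t (Ioi x) = 0 := by
  simp [muEll_Ioi_eq_lintegral_volume γ t hx, lt_ellK_iff hx, htx.not_gt]

lemma volume_setOf_lt_ellK (hx : 0 ≤ x) (hxt : x < t) (u : ℝ) :
    volume {s | x < ellK t s u}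
      = (Ioi x).indicator (fun u => ENNReal.ofReal (u + (t - 2 * x))) u := by
  by_cases hu : x < u
  · simp only [lt_ellK_iff hx, hxt, hu, true_and, ofPred_mem_eq, Real.volume_Ioo, mem_Ioi,
      indicator_of_mem]
    ring_nf
  · simp [lt_ellK_iff hx, hu]

lemma muEll_Ioi (hγ : 1 < γ) (hx : 0 < x) (hxt : x < t) :
    muEll γ t (Ioi x)
      = ENNReal.ofReal (x ^ (-γ + 1) / (γ - 1) + (t - 2 * x) * (x ^ (-γ) / γ)) := by
  have hint : IntegrableOn (fun u : ℝ => u ^ (-γ)) (Ioi x) :=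
    integrableOn_Ioi_rpow_of_lt (by linarith) hx
  have hint' : IntegrableOn (fun u : ℝ => (t - 2 * x) * u ^ (-γ - 1)) (Ioi x) :=
    (integrableOn_Ioi_rpow_of_lt (by linarith) hx).const_mul _
  calc muEll γ t (Ioi x)
      = ∫⁻ u in Ioi x, ENNReal.ofReal (u + (t - 2 * x)) ∂muU γ := by
        simp only [muEll_Ioi_eq_lintegral_volume γ t hx.le, volume_setOf_lt_ellK hx.le hxt]
        exact lintegral_indicator measurableSet_Ioi _
    _ = ∫⁻ u in Ioi x, ENNReal.ofReal (u ^ (-γ - 1)) * ENNReal.ofReal (u + (t - 2 * x)) := by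
        rw [muU, setLIntegral_withDensity_eq_setLIntegral_mul _ (by fun_prop) (by fun_prop)
          measurableSet_Ioi, Measure.restrict_restrict measurableSet_Ioi,
          inter_eq_left.2 (Ioi_subset_Ioi hx.le)]
        rfl
    _ = ∫⁻ u in Ioi x, ENNReal.ofReal (u ^ (-γ) + (t - 2 * x) * u ^ (-γ - 1)) := by
        refine setLIntegral_congr_fun measurableSet_Ioi fun u (hu : x < u) => ?_
        have hu0 : 0 < u := hx.trans hu
        rw [← ENNReal.ofReal_mul (by positivity), mul_add, ← Real.rpow_add_one hu0.ne',
          sub_add_cancel, mul_comm (u ^ (-γ - 1))]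
    _ = ENNReal.ofReal (∫ u in Ioi x, u ^ (-γ) + (t - 2 * x) * u ^ (-γ - 1)) := by
        refine (ofReal_integral_eq_lintegral_ofReal (hint.add hint') ?_).symm
        refine ae_restrict_of_forall_mem measurableSet_Ioi fun u (hu : x < u) => ?_
        have hu0 : 0 < u := hx.trans hu
        have hfactor : u ^ (-γ) + (t - 2 * x) * u ^ (-γ - 1)
            = (u + (t - 2 * x)) * u ^ (-γ - 1) := by
          rw [add_mul, mul_comm u, ← Real.rpow_add_one hu0.ne', sub_add_cancel]
        have hlen : 0 ≤ u + (t - 2 * x) := by linarith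
        exact (mul_nonneg hlen (by positivity)).trans_eq hfactor.symm
    _ = _ := by
        rw [integral_add hint hint', integral_const_mul,
          integral_Ioi_rpow_of_lt (by linarith) hx, integral_Ioi_rpow_of_lt (by linarith) hx,
          sub_add_cancel, neg_div_neg_eq, neg_div, ← div_neg, neg_add, neg_neg, ← sub_eq_add_neg]

lemma hasPowerTailBound_muEll (hγ1 : 1 < γ) (hγ2 : γ ≤ 2) (t : ℝ) :
    HasPowerTailBound (muEll γ t) γ (ENNReal.ofReal (t / (γ * (γ - 1)))) := by
  intro x hx
  rcases le_or_gt t x with htx | hxt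
  · simp [muEll_Ioi_of_le γ hx.le htx]
  have hγ0 : 0 < γ - 1 := sub_pos.2 hγ1
  rw [muEll_Ioi hγ1 hx hxt, ← ENNReal.ofReal_mul (div_nonneg (hx.trans hxt).le (by positivity))]
  refine ENNReal.ofReal_le_ofReal (sub_nonneg.1 ?_)
  have hgap : t / (γ * (γ - 1)) * x ^ (-γ)
        - (x ^ (-γ + 1) / (γ - 1) + (t - 2 * x) * (x ^ (-γ) / γ))
      = x ^ (-γ) * (t - x) * (2 - γ) / (γ * (γ - 1)) := by
    rw [Real.rpow_add_one hx.ne']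
    field_simp
    ring
  rw [hgap]
  exact div_nonneg (mul_nonneg (mul_nonneg (by positivity) (sub_nonneg.2 hxt.le))
    (sub_nonneg.2 hγ2)) (by positivity)

lemma hasPowerTailBound_muEllR (hγ1 : 1 < γ) (hγ2 : γ ≤ 2) (t : ℝ) {FR : Measure ℝ}
    (hFRpos : FR (Iic 0) = 0) :
    HasPowerTailBound (muEllR γ t FR) γ
      (ENNReal.ofReal (t / (γ * (γ - 1))) * ∫⁻ r, ENNReal.ofReal (r ^ γ) ∂FR) :=
  ((hasPowerTailBound_muEll hγ1 hγ2 t).map_mul_prod hFRpos).mono Measure.restrict_le_self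

end Tails

lemma two_div_two_sub_le {γ : ℝ} (hγ1 : 1 ≤ γ) (hγ2 : γ < 2) :
    2 / (2 - γ) ≤ 2 ^ γ + 3 * 2 ^ (γ - 1) / (2 - γ) := by
  have hone : (1 : ℝ) ≤ 2 ^ (γ - 1) := Real.one_le_rpow one_le_two (sub_nonneg.2 hγ1)
  calc 2 / (2 - γ) ≤ 3 * 2 ^ (γ - 1) / (2 - γ) :=
        div_le_div_of_nonneg_right (by linarith) (sub_pos.2 hγ2).le
    _ ≤ 2 ^ γ + 3 * 2 ^ (γ - 1) / (2 - γ) := le_add_of_nonneg_left (by positivity)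

theorem stmt_14_general (γ : ℝ) (hγ1 : 1 < γ) (hγ2 : γ < 2)
    (FR : Measure ℝ) (hFRpos : FR (Set.Iic 0) = 0)
    (hmom : Integrable (fun r => r ^ γ) FR)
    (t : ℝ) (ht : 0 ≤ t) (v0 : ℝ) (hv0 : 0 < v0) (l : ℝ) (hl : 0 ≤ l) :
    ∫⁻ v in Set.Ioc 0 v0, ENNReal.ofReal (Real.exp (l * v) - 1 - l * v) ∂(muEllR γ t FR)
      ≤ ENNReal.ofReal
          ((2 ^ γ * (∫ r, r ^ γ ∂FR) / (γ * (γ - 1))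
              + 3 * (2 ^ (γ - 1) * (∫ r, r ^ γ ∂FR) / (γ * (γ - 1) * (2 - γ))))
            * t * v0 ^ (-γ) * Real.exp (l * v0)) := by
  set M := ∫ r, r ^ γ ∂FR
  have hγ1' : 0 < γ - 1 := sub_pos.2 hγ1
  have hγ2' : 0 < 2 - γ := sub_pos.2 hγ2
  have hrpow : 0 ≤ᵐ[FR] fun r => r ^ γ :=
    (measure_eq_zero_iff_ae_notMem.1 hFRpos).mono fun r hr => Real.rpow_nonneg (not_le.1 hr).le γ
  have hM : 0 ≤ M := integral_nonneg_of_ae hrpow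
  have hbound := (hasPowerTailBound_muEllR hγ1 hγ2.le t hFRpos).setLIntegral_exp_sub_one_sub_le
    hγ2 hl hv0
  rw [← ofReal_integral_eq_lintegral_ofReal hmom hrpow, ← ENNReal.ofReal_mul (by positivity),
    ← ENNReal.ofReal_mul (by positivity)] at hbound
  refine hbound.trans (ENNReal.ofReal_le_ofReal ?_)
  calc _ = M / (γ * (γ - 1)) * t * v0 ^ (-γ) * (2 / (2 - γ))
          * (Real.exp (l * v0) - 1 - l * v0) := by ring
    _ ≤ M / (γ * (γ - 1)) * t * v0 ^ (-γ) * (2 ^ γ + 3 * 2 ^ (γ - 1) / (2 - γ))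
          * Real.exp (l * v0) := by
        have hexp : Real.exp (l * v0) - 1 - l * v0 ≤ Real.exp (l * v0) := by
          linarith [mul_nonneg hl hv0.le]
        gcongr ?_ * ?_ * ?_
        · linarith [Real.add_one_le_exp (l * v0)]
        · exact two_div_two_sub_le hγ1.le hγ2
    _ = _ := by field_simp

/-- For every `t > 0`, `v₀ > 0`, `λ > 0`:
`∫_{(0,v₀]} (e^{λv} - 1 - λv) μ^{ℓ,r}_t(dv) ≤ (D₃ + 3 D₄)·t·v₀^{-γ}·e^{λ v₀}`,
where `D₃ = 2^γ E[R^γ]/(γ(γ-1))` and `D₄ = 2^{γ-1} E[R^γ]/(γ(γ-1)(2-γ))`. -/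
theorem stmt_14 (γ : ℝ) (hγ1 : 1 < γ) (hγ2 : γ < 2)
    (FR : Measure ℝ) [IsProbabilityMeasure FR] (hFRpos : FR (Set.Iic 0) = 0)
    (hmom : Integrable (fun r => r ^ γ) FR)
    (t : ℝ) (ht : 0 < t) (v0 : ℝ) (hv0 : 0 < v0) (l : ℝ) (hl : 0 < l) :
    ∫⁻ v in Set.Ioc 0 v0, ENNReal.ofReal (Real.exp (l * v) - 1 - l * v) ∂(muEllR γ t FR)
      ≤ ENNReal.ofReal
          ((2 ^ γ * (∫ r, r ^ γ ∂FR) / (γ * (γ - 1))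
              + 3 * (2 ^ (γ - 1) * (∫ r, r ^ γ ∂FR) / (γ * (γ - 1) * (2 - γ))))
            * t * v0 ^ (-γ) * Real.exp (l * v0)) :=
  stmt_14_general γ hγ1 hγ2 FR hFRpos hmom t ht.le v0 hv0 l hl.le
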